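/- Define θ_0 = 1 and θ_n = Σ_{i=1}^n θ_{i−1} √(a_{i,n}) for n = 1, …, m. Let α ∈ [1/2, 1], set γ_α = 2^m (1 − α), and define b_α = (1/2) sup_{p ∈ ℕ} ( (β_{1,m,p} − γ_α)² + (η_{1,m} − γ_α)² + β̃_{1,m,p}² + √( ( (β_{1,m,p} − γ_α)² + (η_{1,m} − γ_α)² + β̃_{1,m,p}² )² − 4 (β_{1,m,p} − γ_α)² (η_{1,m} − γ_α)² ) ). If √(b_α) − √(a_{1,m}) ≤ 2^m α − 2 θ_m, then the virtual network S = Q_m ∘ U_m ∘ ⋯ ∘ Q_1 ∘ U_1 is α-averaged. -/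

import Mathlib

/-!
Write each firmly nonexpansive `Qₙ` as `(Id + Mₙ) / 2` with `Mₙ = 2 Qₙ - Id` nonexpansive
(`reflect_nonexp`). For two inputs `z, z'` put `δₙ = 2ⁿ (Sₙ z - Sₙ z')`. Then
`δₙ = Uₙ δₙ₋₁ + wₙ` with `‖wₙ‖ ≤ ‖Uₙ δₙ₋₁‖`, so `δₘ` is `Uₘ ⋯ U₁ δ₀` plus the sum of the terms
`Uₘ ⋯ Uₖ₊₁ wₖ` (`unroll`), and inductively `‖wₖ‖ ≤ θₖ ‖δ₀‖`. Subtracting `γ δ₀`, with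
`γ = 2ᵐ (1 - α)`, from the linear term and using the triangle inequality yields
`‖δₘ - γ δ₀‖ ≤ (√b_α - √a_{1,m} + 2 θₘ) ‖δ₀‖` (`propagate`), which the assumption bounds by
`2ᵐ α ‖δ₀‖`; this is the averagedness of `S`.

The operator norms are controlled through the basis: `Uₙ ∘ ⋯ ∘ Uᵢ` is a block-triangular operator
with diagonal blocks (`opComp_block`), so on each coordinate `p` it is a `2 × 2` triangular matrix,
whose largest squared singular value is the quantity inside the supremum defining `a_{i,n}` or
`b_α` (`two_by_two`, `block_bound`).
-/

noncomputable section

open Finset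

variable {H : Type*} [NormedAddCommGroup H] [InnerProductSpace ℝ H]

/-- Build the pair `(x, b)` in the `ℓ²` product space `H × H`. -/
def mkP (x b : H) : WithLp 2 (H × H) := (WithLp.equiv 2 (H × H)).symm (x, b)

/-- First component of an element of the product space. -/
def fstP (z : WithLp 2 (H × H)) : H := (WithLp.equiv 2 (H × H) z).1

/-- Second component of an element of the product space. -/
def sndP (z : WithLp 2 (H × H)) : H := (WithLp.equiv 2 (H × H) z).2

/-- `(x, b) ↦ x` as a continuous linear map on the `ℓ²` product. -/
def fstL : WithLp 2 (H × H) →L[ℝ] H :=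
  (ContinuousLinearMap.fst ℝ H H).comp
    (WithLp.prodContinuousLinearEquiv 2 ℝ H H).toContinuousLinearMap

/-- `(x, b) ↦ b` as a continuous linear map on the `ℓ²` product. -/
def sndL : WithLp 2 (H × H) →L[ℝ] H :=
  (ContinuousLinearMap.snd ℝ H H).comp
    (WithLp.prodContinuousLinearEquiv 2 ℝ H H).toContinuousLinearMap

/-- `Uₙ(x, b) = (Wₙ x + λₙ b, ηₙ b)` as a continuous linear map on the product space. -/
def Uop (W : ℕ → H →L[ℝ] H) (lam eta : ℕ → ℝ) (n : ℕ) :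
    WithLp 2 (H × H) →L[ℝ] WithLp 2 (H × H) :=
  ((WithLp.prodContinuousLinearEquiv 2 ℝ H H).symm.toContinuousLinearMap).comp
    (((((W n).comp (ContinuousLinearMap.fst ℝ H H)) + lam n • (ContinuousLinearMap.snd ℝ H H)).prod
        (eta n • (ContinuousLinearMap.snd ℝ H H))).comp
      (WithLp.prodContinuousLinearEquiv 2 ℝ H H).toContinuousLinearMap)

/-- Composition `Aₙ ∘ ⋯ ∘ Aᵢ` (the identity when `n < i`, i.e. when the composition is empty). -/
def opComp {E : Type*} [NormedAddCommGroup E] [NormedSpace ℝ E]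
    (A : ℕ → E →L[ℝ] E) (i : ℕ) : ℕ → (E →L[ℝ] E)
  | 0 => 1
  | n + 1 => if n + 1 < i then 1 else (A (n + 1)).comp (opComp A i n)

/-- `η_{i,j} = η_j ⋯ η_i` if `j ≥ i`, and `1` otherwise. -/
def etaP (eta : ℕ → ℝ) (i j : ℕ) : ℝ := ∏ k ∈ Finset.Icc i j, eta k

/-- `β_{i,n,p} = ∏_{j=i}^n β_p^{(j)}`. -/
def betaC (beta : ℕ → ℕ → ℝ) (i n p : ℕ) : ℝ := ∏ j ∈ Finset.Icc i n, beta j p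

/-- `β̃_{i,n,p} = Σ_{j=i}^{n−1} (∏_{l=j+1}^n β_p^{(l)}) λ_j η_{i,j−1} + λ_n η_{i,n−1}`. -/
def betaT (beta : ℕ → ℕ → ℝ) (lam eta : ℕ → ℝ) (i n p : ℕ) : ℝ :=
  (∑ j ∈ Finset.Icc i (n - 1), (∏ l ∈ Finset.Icc (j + 1) n, beta l p) * lam j * etaP eta i (j - 1))
    + lam n * etaP eta i (n - 1)

/-- The operator `W̃_{i,n} = Σ_{j=i}^{n−1} λ_j η_{i,j−1} (Wₙ ∘ ⋯ ∘ W_{j+1}) + λ_n η_{i,n−1} Id`. -/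
def Wt (W : ℕ → H →L[ℝ] H) (lam eta : ℕ → ℝ) (i n : ℕ) : H →L[ℝ] H :=
  (∑ j ∈ Finset.Icc i (n - 1), (lam j * etaP eta i (j - 1)) • opComp W (j + 1) n)
    + (lam n * etaP eta i (n - 1)) • (1 : H →L[ℝ] H)

/-- `a_{i,n}`. -/
def aC (beta : ℕ → ℕ → ℝ) (lam eta : ℕ → ℝ) (i n : ℕ) : ℝ :=
  (1 / 2) * ⨆ p : ℕ,
    (betaC beta i n p ^ 2 + betaT beta lam eta i n p ^ 2 + etaP eta i n ^ 2
      + Real.sqrt ((betaC beta i n p ^ 2 + betaT beta lam eta i n p ^ 2 + etaP eta i n ^ 2) ^ 2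
          - 4 * betaC beta i n p ^ 2 * etaP eta i n ^ 2))

/-- `ā_{i,n} = sup_p (β_{i,n,p}² + β̃_{i,n,p}²)`. -/
def aBar (beta : ℕ → ℕ → ℝ) (lam eta : ℕ → ℝ) (i n : ℕ) : ℝ :=
  ⨆ p : ℕ, (betaC beta i n p ^ 2 + betaT beta lam eta i n p ^ 2)

/-- `Qₙ(x, b) = (Rₙ x, b)`. -/
def Qop (R : ℕ → H → H) (n : ℕ) (z : WithLp 2 (H × H)) : WithLp 2 (H × H) :=
  mkP (R n (fstP z)) (sndP z)

/-- The virtual network `Qₙ ∘ Uₙ ∘ ⋯ ∘ Q₁ ∘ U₁`. -/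
def net (U : ℕ → WithLp 2 (H × H) →L[ℝ] WithLp 2 (H × H))
    (Q : ℕ → WithLp 2 (H × H) → WithLp 2 (H × H)) :
    ℕ → (WithLp 2 (H × H) → WithLp 2 (H × H))
  | 0 => id
  | n + 1 => fun z => Q (n + 1) (U (n + 1) (net U Q n z))

/-- `Ū_m (x, b) = W_m x + λ_m b` as a continuous linear map to `H`. -/
def Ubar (W : ℕ → H →L[ℝ] H) (lam : ℕ → ℝ) (m : ℕ) : WithLp 2 (H × H) →L[ℝ] H :=
  ((W m).comp fstL) + lam m • sndL

/-- `Û₁ b = (λ₁ b, η₁ b)`. -/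
def Uhat1a (lam eta : ℕ → ℝ) : H →L[ℝ] WithLp 2 (H × H) :=
  ((WithLp.prodContinuousLinearEquiv 2 ℝ H H).symm.toContinuousLinearMap).comp
    ((lam 1 • (1 : H →L[ℝ] H)).prod (eta 1 • (1 : H →L[ℝ] H)))

/-- `Û₁ b = (W₁ b + λ₁ b, η₁ b)`. -/
def Uhat1b (W : ℕ → H →L[ℝ] H) (lam eta : ℕ → ℝ) : H →L[ℝ] WithLp 2 (H × H) :=
  ((WithLp.prodContinuousLinearEquiv 2 ℝ H H).symm.toContinuousLinearMap).comp
    ((W 1 + lam 1 • (1 : H →L[ℝ] H)).prod (eta 1 • (1 : H →L[ℝ] H)))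

/-- The chain `Qₙ ∘ Uₙ ∘ ⋯ ∘ Q₂ ∘ U₂ ∘ Q₁ ∘ Û₁` (for `n ≥ 1`), fed with an input in `H`. -/
def midNet (U : ℕ → WithLp 2 (H × H) →L[ℝ] WithLp 2 (H × H))
    (Q : ℕ → WithLp 2 (H × H) → WithLp 2 (H × H)) (U1 : H → WithLp 2 (H × H)) :
    ℕ → (H → WithLp 2 (H × H))
  | 0 => U1
  | 1 => fun b => Q 1 (U1 b)
  | n + 2 => fun b => Q (n + 2) (U (n + 2) (midNet U Q U1 (n + 1) b))

/-- A bounded operator diagonal in the Hilbert basis multiplies each coefficient by its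
eigenvalue. -/
lemma inner_diag [CompleteSpace H] (v : HilbertBasis ℕ ℝ H) (C : H →L[ℝ] H) (c : ℕ → ℝ)
    (hC : ∀ p, C (v p) = c p • v p) (x : H) (p : ℕ) :
    inner ℝ (v p) (C x) = c p * inner ℝ (v p) x := by
  have hs := ((v.hasSum_repr x).mapL C).mapL (innerSL ℝ (v p))
  have hs' := hasSum_single (f := fun i => (innerSL ℝ (v p)) (C (v.repr x i • v i))) p (by
    intro i hi
    simp [hC, v.orthonormal.inner_eq_zero (Ne.symm hi)])
  have h := hs.unique hs'
  simp only [innerSL_apply_apply, map_smul, hC,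
    real_inner_self_eq_norm_sq, v.orthonormal.norm_eq_one, v.repr_apply_apply] at h
  rw [h]; ring

lemma hasSum_sq_inner [CompleteSpace H] (v : HilbertBasis ℕ ℝ H) (x : H) :
    HasSum (fun p => inner ℝ (v p) x ^ 2) (‖x‖ ^ 2) := by
  have h := v.hasSum_inner_mul_inner x x
  rw [real_inner_self_eq_norm_sq] at h
  refine h.congr_fun ?_
  intro p
  rw [real_inner_comm (v p) x, sq]

lemma abs_eig_le (v : HilbertBasis ℕ ℝ H) (C : H →L[ℝ] H) (c : ℕ → ℝ)
    (hC : ∀ p, C (v p) = c p • v p) (p : ℕ) : |c p| ≤ ‖C‖ := by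
  have h := C.le_opNorm (v p)
  rwa [hC, norm_smul, v.orthonormal.norm_eq_one, mul_one, mul_one, Real.norm_eq_abs] at h

/-- The larger eigenvalue of `MᵀM`, where `M` is the triangular matrix with rows `(c, d)` and
`(0, e)`, bounds `‖M (x, y)‖² / ‖(x, y)‖²`. -/
lemma two_by_two (c d e x y : ℝ) :
    (c * x + d * y) ^ 2 + (e * y) ^ 2 ≤
      (1 / 2) * (c ^ 2 + d ^ 2 + e ^ 2
        + Real.sqrt ((c ^ 2 + d ^ 2 + e ^ 2) ^ 2 - 4 * c ^ 2 * e ^ 2)) * (x ^ 2 + y ^ 2) := by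
  -- With `u = c² - d² - e²` and `w = 2cd`, the discriminant is `u² + w²`, and the claim becomes
  -- the Cauchy–Schwarz inequality for `(u, w)` and `(x² - y², 2xy)`.
  have key : (c ^ 2 - d ^ 2 - e ^ 2) * (x ^ 2 - y ^ 2) + (2 * c * d) * (2 * x * y) ≤
      Real.sqrt ((c ^ 2 + d ^ 2 + e ^ 2) ^ 2 - 4 * c ^ 2 * e ^ 2) * (x ^ 2 + y ^ 2) := by
    have h1 : Real.sqrt ((c ^ 2 + d ^ 2 + e ^ 2) ^ 2 - 4 * c ^ 2 * e ^ 2) * (x ^ 2 + y ^ 2)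
        = Real.sqrt (((c ^ 2 + d ^ 2 + e ^ 2) ^ 2 - 4 * c ^ 2 * e ^ 2)
            * (x ^ 2 + y ^ 2) ^ 2) := by
      rw [Real.sqrt_mul' _ (sq_nonneg _), Real.sqrt_sq (by positivity)]
    rw [h1]
    apply Real.le_sqrt_of_sq_le
    nlinarith [sq_nonneg ((c ^ 2 - d ^ 2 - e ^ 2) * (2 * x * y)
      - (2 * c * d) * (x ^ 2 - y ^ 2))]
  nlinarith [key]

/-- Norm bound for a block operator `(x, b) ↦ (C x + D b, e b)` whose blocks are diagonal in the
Hilbert basis. The supremum is a genuine one because the eigenvalues are bounded by `‖C‖` and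
`‖D‖`. -/
lemma block_bound [CompleteSpace H] (v : HilbertBasis ℕ ℝ H) (C D : H →L[ℝ] H) (c d : ℕ → ℝ)
    (e : ℝ) (hC : ∀ p, C (v p) = c p • v p) (hD : ∀ p, D (v p) = d p • v p)
    (z : WithLp 2 (H × H)) :
    ‖mkP (C (fstP z) + D (sndP z)) (e • sndP z)‖ ≤
      Real.sqrt ((1 / 2) * ⨆ p : ℕ, (c p ^ 2 + d p ^ 2 + e ^ 2
        + Real.sqrt ((c p ^ 2 + d p ^ 2 + e ^ 2) ^ 2 - 4 * c p ^ 2 * e ^ 2))) * ‖z‖ := by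
  set f : ℕ → ℝ := fun p => c p ^ 2 + d p ^ 2 + e ^ 2
        + Real.sqrt ((c p ^ 2 + d p ^ 2 + e ^ 2) ^ 2 - 4 * c p ^ 2 * e ^ 2) with hf
  have hbdd : BddAbove (Set.range f) := by
    refine ⟨2 * (‖C‖ ^ 2 + ‖D‖ ^ 2 + e ^ 2), ?_⟩
    rintro _ ⟨p, rfl⟩
    have h1 : c p ^ 2 ≤ ‖C‖ ^ 2 := sq_le_sq' (by linarith [neg_abs_le (c p), abs_eig_le v C c hC p])
      ((le_abs_self _).trans (abs_eig_le v C c hC p))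
    have h2 : d p ^ 2 ≤ ‖D‖ ^ 2 := sq_le_sq' (by linarith [neg_abs_le (d p), abs_eig_le v D d hD p])
      ((le_abs_self _).trans (abs_eig_le v D d hD p))
    have h3 : Real.sqrt ((c p ^ 2 + d p ^ 2 + e ^ 2) ^ 2 - 4 * c p ^ 2 * e ^ 2)
        ≤ c p ^ 2 + d p ^ 2 + e ^ 2 := by
      apply Real.sqrt_le_iff.mpr
      refine ⟨by positivity, ?_⟩
      have : 0 ≤ c p ^ 2 * e ^ 2 := by positivity
      linarith
    simp only [hf]
    linarith
  have hnn : 0 ≤ (1 / 2) * ⨆ p, f p := by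
    have : 0 ≤ ⨆ p, f p := Real.iSup_nonneg fun p => by simp only [hf]; positivity
    linarith
  apply le_of_sq_le_sq _ (by positivity)
  rw [mul_pow, Real.sq_sqrt hnn, WithLp.prod_norm_sq_eq_of_L2, WithLp.prod_norm_sq_eq_of_L2]
  change ‖C (fstP z) + D (sndP z)‖ ^ 2 + ‖e • sndP z‖ ^ 2 ≤
    (1 / 2 * ⨆ p, f p) * (‖fstP z‖ ^ 2 + ‖sndP z‖ ^ 2)
  have hL := (hasSum_sq_inner v (C (fstP z) + D (sndP z))).add (hasSum_sq_inner v (e • sndP z))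
  have hR := ((hasSum_sq_inner v (fstP z)).add (hasSum_sq_inner v (sndP z))).mul_left
    (1 / 2 * ⨆ p, f p)
  refine hasSum_le ?_ hL hR
  intro p
  rw [inner_add_right, inner_diag v C c hC, inner_diag v D d hD, inner_smul_right]
  refine (two_by_two _ _ e _ _).trans ?_
  have := le_ciSup hbdd p
  gcongr

lemma Uop_eq (W : ℕ → H →L[ℝ] H) (lam eta : ℕ → ℝ) (n : ℕ) (z : WithLp 2 (H × H)) :
    Uop W lam eta n z = mkP (W n (fstP z) + lam n • sndP z) (eta n • sndP z) := rfl

lemma etaP_succ (eta : ℕ → ℝ) {i n : ℕ} (h : i ≤ n + 1) :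
    etaP eta i (n + 1) = eta (n + 1) * etaP eta i n := by
  rw [etaP, Finset.prod_Icc_succ_top h, mul_comm]; rfl

lemma betaC_succ (beta : ℕ → ℕ → ℝ) {i n : ℕ} (p : ℕ) (h : i ≤ n + 1) :
    betaC beta i (n + 1) p = beta (n + 1) p * betaC beta i n p := by
  rw [betaC, Finset.prod_Icc_succ_top h, mul_comm]; rfl

lemma betaT_succ (beta : ℕ → ℕ → ℝ) (lam eta : ℕ → ℝ) {i n : ℕ} (p : ℕ) (hi : 1 ≤ i)
    (h : i ≤ n) :
    betaT beta lam eta i (n + 1) p =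
      beta (n + 1) p * betaT beta lam eta i n p + lam (n + 1) * etaP eta i n := by
  obtain ⟨k, rfl⟩ : ∃ k, n = k + 1 := ⟨n - 1, by omega⟩
  simp only [betaT, Nat.add_sub_cancel]
  rw [Finset.sum_Icc_succ_top h, mul_add, Finset.mul_sum]
  congr 2
  · refine Finset.sum_congr rfl fun j hj => ?_
    rw [Finset.mem_Icc] at hj
    rw [Finset.prod_Icc_succ_top (by omega)]
    ring
  · simp [mul_assoc]

/-- The composition `Uₙ ∘ ⋯ ∘ Uᵢ` has the triangular block form `(x, b) ↦ (C x + D b, η_{i,n} b)`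
with `C` and `D` diagonal, of eigenvalues `β_{i,n,p}` and `β̃_{i,n,p}`. -/
lemma opComp_block (m : ℕ) (v : HilbertBasis ℕ ℝ H)
    (W : ℕ → H →L[ℝ] H) (beta : ℕ → ℕ → ℝ) (lam eta : ℕ → ℝ)
    (hW : ∀ n, 1 ≤ n → n ≤ m → ∀ p : ℕ, W n (v p) = beta n p • v p)
    (i n : ℕ) (hi : 1 ≤ i) (hin : i ≤ n) (hnm : n ≤ m) :
    ∃ C D : H →L[ℝ] H, (∀ p, C (v p) = betaC beta i n p • v p) ∧
      (∀ p, D (v p) = betaT beta lam eta i n p • v p) ∧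
      ∀ z, opComp (Uop W lam eta) i n z =
        mkP (C (fstP z) + D (sndP z)) (etaP eta i n • sndP z) := by
  induction n, hin using Nat.le_induction with
  | base =>
    obtain ⟨k, rfl⟩ : ∃ k, i = k + 1 := ⟨i - 1, by omega⟩
    refine ⟨W (k + 1), lam (k + 1) • 1, ?_, ?_, ?_⟩
    · intro p; simp [betaC, hW _ hi hnm]
    · intro p; simp [betaT, etaP]
    · intro z
      have h0 : opComp (Uop W lam eta) (k + 1) k = 1 := by
        cases k <;> simp [opComp]
      simp [opComp, h0, Uop_eq, etaP]
  | succ n hin ih =>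
    obtain ⟨C, D, hC, hD, hz⟩ := ih (by omega)
    refine ⟨(W (n + 1)).comp C, (W (n + 1)).comp D + (lam (n + 1) * etaP eta i n) • 1,
      ?_, ?_, ?_⟩
    · intro p
      simp [hC, hW (n + 1) (by omega) hnm, betaC_succ beta p (show i ≤ n + 1 by omega), smul_smul,
        mul_comm]
    · intro p
      simp [hD, hW (n + 1) (by omega) hnm, betaT_succ beta lam eta p hi hin, smul_smul,
        mul_comm, add_smul]
    · intro z
      rw [opComp, if_neg (by omega), ContinuousLinearMap.comp_apply, hz, Uop_eq,
        etaP_succ eta (by omega)]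
      simp [mkP, fstP, sndP, smul_smul, add_assoc]

/-- `2 Q - Id` is nonexpansive when `Q` acts as a firmly nonexpansive map on the first component
and as the identity on the second. -/
lemma reflect_nonexp (R : ℕ → H → H) (n : ℕ)
    (hR : ∀ x y : H,
      ‖R n x - R n y‖ ^ 2 + ‖(x - R n x) - (y - R n y)‖ ^ 2 ≤ ‖x - y‖ ^ 2)
    (z z' : WithLp 2 (H × H)) :
    ‖(2 : ℝ) • (Qop R n z - Qop R n z') - (z - z')‖ ≤ ‖z - z'‖ := by
  apply le_of_sq_le_sq _ (norm_nonneg _)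
  rw [WithLp.prod_norm_sq_eq_of_L2, WithLp.prod_norm_sq_eq_of_L2]
  change ‖(2 : ℝ) • (R n (fstP z) - R n (fstP z')) - (fstP z - fstP z')‖ ^ 2
    + ‖(2 : ℝ) • (sndP z - sndP z') - (sndP z - sndP z')‖ ^ 2
    ≤ ‖fstP z - fstP z'‖ ^ 2 + ‖sndP z - sndP z'‖ ^ 2
  have h2 : (2 : ℝ) • (sndP z - sndP z') - (sndP z - sndP z') = sndP z - sndP z' := by
    rw [two_smul]; abel
  rw [h2]
  have hr := hR (fstP z) (fstP z')
  set x := fstP z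
  set y := fstP z'
  have hp := parallelogram_law_with_norm ℝ (R n x - R n y) ((x - R n x) - (y - R n y))
  have e1 : R n x - R n y + ((x - R n x) - (y - R n y)) = x - y := by abel
  have e2 : R n x - R n y - ((x - R n x) - (y - R n y))
      = (2 : ℝ) • (R n x - R n y) - (x - y) := by rw [two_smul]; abel
  rw [e1, e2] at hp
  nlinarith

lemma opComp_succ_self {E : Type*} [NormedAddCommGroup E] [NormedSpace ℝ E]
    (A : ℕ → E →L[ℝ] E) (n : ℕ) : opComp A (n + 1) n = 1 := by
  cases n <;> simp [opComp]

/-- Solution of the recursion `δₙ₊₁ = Aₙ₊₁ δₙ + wₙ₊₁` with `δ₀ = w₀`. -/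
lemma unroll {E : Type*} [NormedAddCommGroup E] [NormedSpace ℝ E]
    (A : ℕ → E →L[ℝ] E) (δ w : ℕ → E) (h0 : w 0 = δ 0)
    (hδ : ∀ n, δ (n + 1) = A (n + 1) (δ n) + w (n + 1)) (n : ℕ) :
    A (n + 1) (δ n) = ∑ i ∈ Finset.range (n + 1), opComp A (i + 1) (n + 1) (w i) := by
  induction n with
  | zero => simp [opComp, h0]
  | succ n ih =>
    rw [hδ, map_add, ih, map_sum, Finset.sum_range_succ _ (n + 1)]
    congr 1
    · refine Finset.sum_congr rfl fun i hi => ?_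
      rw [Finset.mem_range] at hi
      conv_rhs => rw [opComp, if_neg (by omega)]
      rfl
    · conv_rhs => rw [opComp, if_neg (by omega), opComp_succ_self]
      rfl

/-- Propagation of the norm bounds along `δₙ₊₁ = Aₙ₊₁ δₙ + wₙ₊₁` when
`‖wₙ₊₁‖ ≤ ‖Aₙ₊₁ δₙ‖`. The first term `Aₘ ⋯ A₁ δ₀` is compared with `γ δ₀` separately, which is
why `s 1 m` is traded for `b`. -/
lemma propagate {E : Type*} [NormedAddCommGroup E] [NormedSpace ℝ E]
    (A : ℕ → E →L[ℝ] E) (δ w : ℕ → E) (h0 : w 0 = δ 0)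
    (hδ : ∀ n, δ (n + 1) = A (n + 1) (δ n) + w (n + 1))
    (m : ℕ) (hm : 1 ≤ m) (hw : ∀ n, n < m → ‖w (n + 1)‖ ≤ ‖A (n + 1) (δ n)‖)
    (s : ℕ → ℕ → ℝ) (hs0 : ∀ i n, 0 ≤ s i n)
    (hs : ∀ i n, 1 ≤ i → i ≤ n → n ≤ m → ∀ x, ‖opComp A i n x‖ ≤ s i n * ‖x‖)
    (θ : ℕ → ℝ) (hθ0 : θ 0 = 1)
    (hθ : ∀ n, 1 ≤ n → n ≤ m → θ n = ∑ i ∈ Finset.Icc 1 n, θ (i - 1) * s i n)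
    (γ b : ℝ) (hb : ∀ x, ‖opComp A 1 m x - γ • x‖ ≤ b * ‖x‖) :
    ‖δ m - γ • δ 0‖ ≤ (b - s 1 m + 2 * θ m) * ‖δ 0‖ := by
  have hθ' : ∀ n, n < m →
      θ (n + 1) = ∑ i ∈ Finset.range (n + 1), θ i * s (i + 1) (n + 1) := by
    intro n hn
    have h := Finset.sum_Ico_add' (fun i => θ (i - 1) * s i (n + 1)) 0 (n + 1) 1
    rw [hθ (n + 1) (by omega) (by omega), Finset.range_eq_Ico]
    exact h.symm
  have hwθ : ∀ n, n ≤ m → ‖w n‖ ≤ θ n * ‖δ 0‖ := by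
    intro n
    induction n using Nat.strong_induction_on with
    | _ n ih =>
      intro hn
      rcases n with _ | n
      · simp [h0, hθ0]
      · refine (hw n (by omega)).trans ?_
        rw [unroll A δ w h0 hδ, hθ' n (by omega), Finset.sum_mul]
        refine (norm_sum_le _ _).trans (Finset.sum_le_sum fun i hi => ?_)
        rw [Finset.mem_range] at hi
        refine (hs (i + 1) (n + 1) (by omega) (by omega) hn _).trans ?_
        have := mul_le_mul_of_nonneg_left (ih i hi (by omega)) (hs0 (i + 1) (n + 1))
        linarith
  obtain ⟨k, rfl⟩ : ∃ k, m = k + 1 := ⟨m - 1, by omega⟩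
  have e : δ (k + 1) - γ • δ 0 = (opComp A 1 (k + 1) (δ 0) - γ • δ 0)
      + ∑ i ∈ Finset.range k, opComp A (i + 1 + 1) (k + 1) (w (i + 1)) + w (k + 1) := by
    rw [hδ, unroll A δ w h0 hδ, Finset.sum_range_succ', h0]
    abel
  have hsum : ‖∑ i ∈ Finset.range k, opComp A (i + 1 + 1) (k + 1) (w (i + 1))‖
      ≤ (θ (k + 1) - s 1 (k + 1)) * ‖δ 0‖ := by
    rw [hθ' k (by omega), Finset.sum_range_succ', hθ0, one_mul, add_sub_cancel_right,
      Finset.sum_mul]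
    refine (norm_sum_le _ _).trans (Finset.sum_le_sum fun i hi => ?_)
    rw [Finset.mem_range] at hi
    refine (hs (i + 1 + 1) (k + 1) (by omega) (by omega) le_rfl _).trans ?_
    have := mul_le_mul_of_nonneg_left (hwθ (i + 1) (by omega)) (hs0 (i + 1 + 1) (k + 1))
    linarith
  rw [e]
  refine (norm_add₃_le).trans ?_
  linarith [hb (δ 0), hwθ (k + 1) le_rfl]

theorem statement7 (m : ℕ) (hm : 1 ≤ m) [CompleteSpace H]
    (v : HilbertBasis ℕ ℝ H)
    (W : ℕ → H →L[ℝ] H) (beta : ℕ → ℕ → ℝ) (lam eta : ℕ → ℝ)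
    (hW : ∀ n, 1 ≤ n → n ≤ m → ∀ p : ℕ, W n (v p) = beta n p • v p)
    (hlam : ∀ n, 1 ≤ n → n ≤ m → 0 < lam n)
    (heta : ∀ n, 1 ≤ n → n ≤ m → 0 < eta n)
    (R : ℕ → H → H)
    (hR : ∀ n, 1 ≤ n → n ≤ m → ∀ x y : H,
      ‖R n x - R n y‖ ^ 2 + ‖(x - R n x) - (y - R n y)‖ ^ 2 ≤ ‖x - y‖ ^ 2)
    (θ : ℕ → ℝ) (hθ0 : θ 0 = 1)
    (hθ : ∀ n, 1 ≤ n → n ≤ m →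
      θ n = ∑ i ∈ Finset.Icc 1 n, θ (i - 1) * Real.sqrt (aC beta lam eta i n))
    (α : ℝ) (hα : 1 / 2 ≤ α) (hα1 : α ≤ 1)
    (bα : ℝ)
    (hbα : bα = (1 / 2) * ⨆ p : ℕ,
      ((betaC beta 1 m p - 2 ^ m * (1 - α)) ^ 2 + (etaP eta 1 m - 2 ^ m * (1 - α)) ^ 2
          + betaT beta lam eta 1 m p ^ 2
        + Real.sqrt (((betaC beta 1 m p - 2 ^ m * (1 - α)) ^ 2
              + (etaP eta 1 m - 2 ^ m * (1 - α)) ^ 2 + betaT beta lam eta 1 m p ^ 2) ^ 2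
            - 4 * (betaC beta 1 m p - 2 ^ m * (1 - α)) ^ 2
              * (etaP eta 1 m - 2 ^ m * (1 - α)) ^ 2)))
    (hcond : Real.sqrt bα - Real.sqrt (aC beta lam eta 1 m) ≤ 2 ^ m * α - 2 * θ m) :
    ∃ Rm : WithLp 2 (H × H) → WithLp 2 (H × H),
      (∀ z z' : WithLp 2 (H × H), ‖Rm z - Rm z'‖ ≤ ‖z - z'‖) ∧
      ∀ z : WithLp 2 (H × H),
        net (Uop W lam eta) (Qop R) m z = (1 - α) • z + α • Rm z := by
  set U := Uop W lam eta with hU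
  set Q := Qop R with hQ
  have hα0 : 0 < α := by linarith
  have hs : ∀ i n, 1 ≤ i → i ≤ n → n ≤ m → ∀ x,
      ‖opComp U i n x‖ ≤ Real.sqrt (aC beta lam eta i n) * ‖x‖ := by
    intro i n hi hin hnm x
    obtain ⟨C, D, hC, hD, hz⟩ := opComp_block m v W beta lam eta hW i n hi hin hnm
    rw [hz]
    exact block_bound v C D _ _ _ hC hD x
  have hb : ∀ x, ‖opComp U 1 m x - ((2 : ℝ) ^ m * (1 - α)) • x‖ ≤ Real.sqrt bα * ‖x‖ := by
    intro x
    obtain ⟨C, D, hC, hD, hz⟩ := opComp_block m v W beta lam eta hW 1 m le_rfl hm le_rfl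
    have h := block_bound v (C - ((2 : ℝ) ^ m * (1 - α)) • 1) D
      (fun p => betaC beta 1 m p - 2 ^ m * (1 - α)) (betaT beta lam eta 1 m)
      (etaP eta 1 m - 2 ^ m * (1 - α)) (fun p => by simp [hC, sub_smul]) hD x
    have e : opComp U 1 m x - ((2 : ℝ) ^ m * (1 - α)) • x
        = mkP ((C - ((2 : ℝ) ^ m * (1 - α)) • 1) (fstP x) + D (sndP x))
          ((etaP eta 1 m - 2 ^ m * (1 - α)) • sndP x) := by
      rw [hz]
      change mkP (C (fstP x) + D (sndP x) - ((2 : ℝ) ^ m * (1 - α)) • fstP x)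
        (etaP eta 1 m • sndP x - ((2 : ℝ) ^ m * (1 - α)) • sndP x) = _
      congr 1
      · simp; abel
      · rw [sub_smul]
    rw [e, hbα]
    simp only [add_right_comm _ ((etaP eta 1 m - 2 ^ m * (1 - α)) ^ 2)
      (betaT beta lam eta 1 m _ ^ 2)]
    exact h
  -- The recursion is applied to `δₙ`, the difference of the outputs of `Sₙ` scaled by `2ⁿ`, with
  -- `wₙ₊₁` the difference under `2ⁿ (2 Qₙ₊₁ - Id)` of the inputs of `Qₙ₊₁`.
  have key : ∀ z z', ‖(net U Q m z - net U Q m z') - (1 - α) • (z - z')‖ ≤ α * ‖z - z'‖ := by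
    intro z z'
    have h := propagate U (fun n => (2 : ℝ) ^ n • (net U Q n z - net U Q n z'))
      (fun n => Nat.casesOn n (z - z') fun n => (2 : ℝ) ^ n •
        ((2 : ℝ) • (Q (n + 1) (U (n + 1) (net U Q n z)) - Q (n + 1) (U (n + 1) (net U Q n z')))
          - (U (n + 1) (net U Q n z) - U (n + 1) (net U Q n z'))))
      (by simp [net])
      (by
        intro n
        simp only [net, map_smul, map_sub, pow_succ, smul_sub, mul_smul]
        abel)
      m hm
      (by
        intro n hn
        simp only [map_smul, map_sub, norm_smul]
        exact mul_le_mul_of_nonneg_left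
          (reflect_nonexp R (n + 1) (hR (n + 1) (by omega) (by omega)) _ _) (norm_nonneg _))
      (fun i n => Real.sqrt (aC beta lam eta i n)) (fun i n => Real.sqrt_nonneg _) hs θ hθ0 hθ
      ((2 : ℝ) ^ m * (1 - α)) (Real.sqrt bα) hb
    simp only [pow_zero, one_smul, net, id] at h
    rw [mul_smul, ← smul_sub, norm_smul, norm_pow, Real.norm_ofNat] at h
    have h2 : (2 : ℝ) ^ m * ‖(net U Q m z - net U Q m z') - (1 - α) • (z - z')‖
        ≤ 2 ^ m * (α * ‖z - z'‖) := by
      refine h.trans ?_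
      rw [← mul_assoc]
      exact mul_le_mul_of_nonneg_right (by linarith) (norm_nonneg _)
    exact le_of_mul_le_mul_left h2 (by positivity)
  refine ⟨fun z => α⁻¹ • (net U Q m z - (1 - α) • z), ?_, ?_⟩
  · intro z z'
    have e : net U Q m z - (1 - α) • z - (net U Q m z' - (1 - α) • z')
        = (net U Q m z - net U Q m z') - (1 - α) • (z - z') := by
      rw [smul_sub]; abel
    rw [← smul_sub, e, norm_smul, norm_inv, Real.norm_of_nonneg hα0.le,
      inv_mul_le_iff₀ hα0]
    exact key z z'
  · intro z
    rw [smul_inv_smul₀ hα0.ne']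
    abel
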